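/- If w is a prefix normal binary word, then the word w0 (w extended by appending the symbol 0) is also prefix normal. -/

import Mathlib

/-- A binary word (list of Booleans, `true` = 1) is prefix normal if no substring
has more 1s than the prefix of the same length. -/
def IsPrefixNormal (w : List Bool) : Prop :=
  ∀ u : List Bool, u <:+: w → u.count true ≤ (w.take u.length).count true

/-- The number of prefix normal words of length `n`. -/
noncomputable def pnw (n : ℕ) : ℕ :=
  Nat.card {w : List Bool // w.length = n ∧ IsPrefixNormal w}

theorem prefixNormal_append_zero (w : List Bool)
    (hw : IsPrefixNormal w) : IsPrefixNormal (w ++ [false]) := by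
  have key (t : List Bool) (ht : t <:+: w) (n : ℕ) (hn : t.length ≤ n) :
      t.count true ≤ ((w ++ [false]).take n).count true := by
    refine (hw t ht).trans (List.Sublist.count_le true ?_)
    exact ((List.take_prefix_take_left hn).trans
      ((List.prefix_append w [false]).take n)).sublist
  intro u hu
  rcases List.infix_concat_iff.mp hu with hu | hu
  · rcases List.suffix_concat_iff.mp hu with rfl | ⟨t, rfl, ht⟩
    · simp
    · simpa using key t ht.isInfix (t ++ [false]).length (by simp)
  · exact key u hu u.length le_rfl
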